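/- arXiv:0901.4277 — 2 statements merged into one kernel-verified Lean document; each statement's English description precedes it below -/
import Mathlib

section
/- Let k be a field, n ≥ 3, and let a_1,...,a_{n-2}, b_1,...,b_{n-2} be nonzero elements of k. The quotient ring R/J of the polynomial ring R = k[l, e_1,...,e_n, s_1,...,s_n] by the ideal J = (g_1,...,g_{n-2}), where g_i = s_i·e_i + a_i·s_{n-1}·e_{n-1} + b_i·s_n·e_n, has Krull dimension n + 3. -/
open MvPolynomial

/-- Index type for the `2n+1` variables `l, e₁,…,eₙ, s₁,…,sₙ` of
`R = k[l, e₁, …, eₙ, s₁, …, sₙ]`. -/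
abbrev CoxVar (n : ℕ) : Type := Unit ⊕ Fin n ⊕ Fin n

/-- The variable `l`. -/
def lVar (n : ℕ) : CoxVar n := Sum.inl ()

/-- The variable `eᵢ` (0-indexed). -/
def eVar {n : ℕ} (i : Fin n) : CoxVar n := Sum.inr (Sum.inl i)

/-- The variable `sᵢ` (0-indexed). -/
def sVar {n : ℕ} (i : Fin n) : CoxVar n := Sum.inr (Sum.inr i)

/-- The quadric trinomial `gᵢ = sᵢ·eᵢ + aᵢ·s_{n-1}·e_{n-1} + bᵢ·sₙ·eₙ`
(1-based indexing as in the paper; here `i : Fin (n-2)` is 0-based). -/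
noncomputable def coxRel (k : Type*) [Field k] (n : ℕ) (hn : 3 ≤ n) (a b : Fin (n - 2) → k)
    (i : Fin (n - 2)) : MvPolynomial (CoxVar n) k :=
  X (sVar (Fin.castLE (by omega) i)) * X (eVar (Fin.castLE (by omega) i))
    + C (a i) * X (sVar ⟨n - 2, by omega⟩) * X (eVar ⟨n - 2, by omega⟩)
    + C (b i) * X (sVar ⟨n - 1, by omega⟩) * X (eVar ⟨n - 1, by omega⟩)



theorem ringKrullDim_eq_of_integral_inj {A B : Type*} [CommRing A] [CommRing B] (f : A →+* B)
    (hf : f.IsIntegral) (hinj : Function.Injective f) : ringKrullDim B = ringKrullDim A := by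
  have hs := hf.comap_surjective hinj
  algebraize [f]
  apply le_antisymm
  · refine Order.krullDim_le_of_strictMono (PrimeSpectrum.comap (algebraMap A B)) ?_
    intro I J h
    exact Ideal.IsIntegral.comap_lt_comap (R := A) (show I.asIdeal < J.asIdeal from h)
  · refine iSup_le fun l => ?_
    obtain ⟨P, hP⟩ := hs l.head
    have : P.asIdeal.LiesOver l.head.asIdeal := ⟨by rw [← hP]; rfl⟩
    obtain ⟨L, hL, -⟩ := Ideal.exists_ltSeries_of_hasGoingUp l P.asIdeal
    rw [← hL]
    exact le_iSup (fun p : LTSeries (PrimeSpectrum B) => ((p.length : ℕ∞) : WithBot ℕ∞)) L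

/-- Variables of the Noether normalization. -/
abbrev NVar (n : ℕ) : Type := Unit ⊕ Fin (n - 2) ⊕ Fin 2 ⊕ Fin 2

/-- Images of the Noether normalization variables. -/
noncomputable def nMap (k : Type*) [Field k] (n : ℕ) (hn : 3 ≤ n) :
    NVar n → MvPolynomial (CoxVar n) k
  | Sum.inl _ => X (lVar n)
  | Sum.inr (Sum.inl i) => X (sVar (Fin.castLE (by omega) i)) + X (eVar (Fin.castLE (by omega) i))
  | Sum.inr (Sum.inr (Sum.inl j)) => X (sVar ⟨n - 2 + j, by omega⟩)
  | Sum.inr (Sum.inr (Sum.inr j)) => X (eVar ⟨n - 2 + j, by omega⟩)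

/-- The elements `-(a s e + b s e)`. -/
noncomputable def nQ (k : Type*) [Field k] (n : ℕ) (a b : Fin (n - 2) → k) (i : Fin (n - 2)) :
    MvPolynomial (NVar n) k :=
  - (C (a i) * X (Sum.inr (Sum.inr (Sum.inl 0))) * X (Sum.inr (Sum.inr (Sum.inr 0)))
    + C (b i) * X (Sum.inr (Sum.inr (Sum.inl 1))) * X (Sum.inr (Sum.inr (Sum.inr 1))))

theorem fin_cases_aux (n : ℕ) (hn : 3 ≤ n) (i : Fin n) :
    (∃ j : Fin (n - 2), i = Fin.castLE (by omega) j) ∨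
      (∃ j : Fin 2, i = ⟨n - 2 + j, by omega⟩) := by
  by_cases h : (i : ℕ) < n - 2
  · exact Or.inl ⟨⟨i, h⟩, rfl⟩
  · exact Or.inr ⟨⟨i - (n - 2), by omega⟩, by ext; simp; omega⟩

theorem stmt3 (k : Type*) [Field k] (n : ℕ) (hn : 3 ≤ n)
    (a b : Fin (n - 2) → k) (ha : ∀ i, a i ≠ 0) (hb : ∀ i, b i ≠ 0) :
    ringKrullDim (MvPolynomial (CoxVar n) k ⧸
        Ideal.span (Set.range (coxRel k n hn a b))) = n + 3 := by
  set J := Ideal.span (Set.range (coxRel k n hn a b)) with hJ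
  let φ : MvPolynomial (NVar n) k →+* MvPolynomial (CoxVar n) k :=
    (aeval (nMap k n hn) : MvPolynomial (NVar n) k →ₐ[k] MvPolynomial (CoxVar n) k).toRingHom
  have φX : ∀ v, φ (X v) = nMap k n hn v := fun v => by simp [φ]
  have φC : ∀ c, φ (C c) = C c := fun c => by simp [φ, algebraMap_eq]
  let f := (Ideal.Quotient.mk J).comp φ
  have h1 : (⟨n - 2 + ((1 : Fin 2) : ℕ), by simp; omega⟩ : Fin n) = ⟨n - 1, by omega⟩ := by
    ext; simp; omega
  have φQ : ∀ i, φ (nQ k n a b i) = X (sVar (Fin.castLE (by omega) i)) *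
      X (eVar (Fin.castLE (by omega) i)) - coxRel k n hn a b i := by
    intro i
    simp only [nQ, map_neg, map_add, map_mul, φC, φX, nMap, coxRel, h1]
    simp only [Fin.val_zero, add_zero]
    ring
  have hs : ∀ i : Fin (n - 2), f.IsIntegralElem
      (Ideal.Quotient.mk J (X (sVar (Fin.castLE (by omega) i)))) := by
    intro i
    refine ⟨Polynomial.X ^ 2 + (Polynomial.C (-X (Sum.inr (Sum.inl i))) * Polynomial.X
      + Polynomial.C (nQ k n a b i)), ?_, ?_⟩
    · apply Polynomial.monic_X_pow_add
      exact lt_of_le_of_lt Polynomial.degree_linear_le (by norm_num)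
    · simp only [Polynomial.eval₂_add, Polynomial.eval₂_pow, Polynomial.eval₂_X,
        Polynomial.eval₂_mul]
      have e1 : f (-X (Sum.inr (Sum.inl i))) = Ideal.Quotient.mk J
          (-(X (sVar (Fin.castLE (by omega) i)) + X (eVar (Fin.castLE (by omega) i)))) := by
        rw [RingHom.comp_apply, map_neg, φX, nMap]
      have e2 : f (nQ k n a b i) = Ideal.Quotient.mk J (X (sVar (Fin.castLE (by omega) i)) *
          X (eVar (Fin.castLE (by omega) i)) - coxRel k n hn a b i) := by
        rw [RingHom.comp_apply, φQ]
      rw [Polynomial.eval₂_C, Polynomial.eval₂_C, e1, e2, ← map_mul, ← map_pow, ← map_add, ← map_add, Ideal.Quotient.eq_zero_iff_mem]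
      have hm : coxRel k n hn a b i ∈ J := Ideal.subset_span ⟨i, rfl⟩
      convert J.neg_mem hm using 1
      ring
  have hint : f.IsIntegral := by
    intro x
    obtain ⟨x, rfl⟩ := Ideal.Quotient.mk_surjective x
    induction x using MvPolynomial.induction_on with
    | C c =>
      have : Ideal.Quotient.mk J (C c) = f (C c) := by simp [f, φC]
      rw [this]; exact f.isIntegralElem_map
    | add p q hp hq => rw [map_add]; exact RingHom.IsIntegralElem.add f hp hq
    | mul_X p v hp =>
      rw [map_mul]
      refine RingHom.IsIntegralElem.mul f hp ?_
      have key : ∀ w, f.IsIntegralElem (Ideal.Quotient.mk J (nMap k n hn w)) := fun w => by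
        have : Ideal.Quotient.mk J (nMap k n hn w) = f (X w) := by simp [f, φX]
        rw [this]; exact f.isIntegralElem_map
      rcases v with u | i | i
      · exact key (Sum.inl ())
      · rcases fin_cases_aux n hn i with ⟨j, rfl⟩ | ⟨j, rfl⟩
        · have := RingHom.IsIntegralElem.sub f (key (Sum.inr (Sum.inl j))) (hs j)
          rw [← map_sub] at this
          simp only [nMap, add_sub_cancel_left] at this
          exact this
        · exact key (Sum.inr (Sum.inr (Sum.inr j)))
      · rcases fin_cases_aux n hn i with ⟨j, rfl⟩ | ⟨j, rfl⟩
        · exact hs j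
        · exact key (Sum.inr (Sum.inr (Sum.inl j)))
  have hinj : Function.Injective f := by
    let K := AlgebraicClosure (FractionRing (MvPolynomial (NVar n) k))
    let ι : MvPolynomial (NVar n) k →+* K :=
      (algebraMap (FractionRing (MvPolynomial (NVar n) k)) K).comp (algebraMap _ _)
    have hι : Function.Injective ι :=
      (algebraMap (FractionRing (MvPolynomial (NVar n) k)) K).injective.comp
        (IsFractionRing.injective _ _)
    have hr : ∀ i : Fin (n - 2), ∃ r : K,
        r * (ι (X (Sum.inr (Sum.inl i))) - r) = ι (nQ k n a b i) := by
      intro i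
      obtain ⟨r, hr⟩ := IsAlgClosed.exists_root (Polynomial.X ^ 2 +
        (Polynomial.C (-ι (X (Sum.inr (Sum.inl i)))) * Polynomial.X
          + Polynomial.C (ι (nQ k n a b i)))) (by
        rw [Polynomial.degree_add_eq_left_of_degree_lt]
        · simp
        · rw [Polynomial.degree_X_pow]
          exact lt_of_le_of_lt Polynomial.degree_linear_le (by norm_num))
      refine ⟨r, ?_⟩
      simp [Polynomial.IsRoot] at hr
      linear_combination -hr
    choose r hr using hr
    let g : CoxVar n → K := fun v => match v with
      | Sum.inl _ => ι (X (Sum.inl ()))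
      | Sum.inr (Sum.inl i) => if h : (i : ℕ) < n - 2 then
          ι (X (Sum.inr (Sum.inl ⟨i, h⟩))) - r ⟨i, h⟩ else
          ι (X (Sum.inr (Sum.inr (Sum.inr ⟨i - (n - 2), by omega⟩))))
      | Sum.inr (Sum.inr i) => if h : (i : ℕ) < n - 2 then r ⟨i, h⟩ else
          ι (X (Sum.inr (Sum.inr (Sum.inl ⟨i - (n - 2), by omega⟩))))
    let ψ : MvPolynomial (CoxVar n) k →+* K := eval₂Hom (ι.comp C) g
    have ψφ : ψ.comp φ = ι := by
      apply MvPolynomial.ringHom_ext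
      · intro c; simp [φC, ψ]
      · rintro (u | i | j | j)
        · simp [φX, nMap, ψ, g, lVar]
        · simp [φX, nMap, ψ, g, sVar, eVar]
        · simp [φX, nMap, ψ, g, sVar, eVar]
        · simp [φX, nMap, ψ, g, sVar, eVar]
    have hψ : ∀ x ∈ J, ψ x = 0 := by
      intro x hx
      have : J ≤ RingHom.ker ψ := by
        rw [hJ, Ideal.span_le]
        rintro _ ⟨i, rfl⟩
        have h2 := congrArg ψ (φQ i)
        rw [← RingHom.comp_apply, ψφ, map_sub, ← hr i] at h2
        have h3 : ψ (X (sVar (Fin.castLE (by omega) i)) * X (eVar (Fin.castLE (by omega) i))) =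
            r i * (ι (X (Sum.inr (Sum.inl i))) - r i) := by
          simp [ψ, g, sVar, eVar]
        rw [h3] at h2
        show ψ _ = 0
        linear_combination h2
      exact this hx
    have hc : (Ideal.Quotient.lift J ψ hψ).comp f = ι := by
      rw [← ψφ]; ext <;> simp [f]
    have : Function.Injective ((Ideal.Quotient.lift J ψ hψ) ∘ f) := by
      rw [← RingHom.coe_comp, hc]; exact hι
    exact this.of_comp
  rw [ringKrullDim_eq_of_integral_inj f hint hinj, MvPolynomial.ringKrullDim_of_isNoetherianRing,
    ringKrullDim_eq_zero_of_field, zero_add]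
  have : Nat.card (NVar n) = n + 3 := by
    simp [Nat.card_eq_fintype_card]; omega
  rw [this]; push_cast; rfl
end

section
/- Let k be a field, n ≥ 3, and let a_1,...,a_{n-2}, b_1,...,b_{n-2} be nonzero elements of k. Grade R = k[l, e_1,...,e_n, s_1,...,s_n] by ℤ^{n+1} via deg(l) = L − E_1 − ... − E_n, deg(e_i) = E_i, deg(s_i) = L − E_i, where L, E_1,...,E_n is the standard basis of ℤ^{n+1}. Let J = (g_1,...,g_{n-2}) with g_i = s_i·e_i + a_i·s_{n-1}·e_{n-1} + b_i·s_n·e_n (note each g_i is homogeneous of degree L). Then for any non-negative integers d, a_1',...,a_n' with d ≥ a_1' + ... + a_n', the k-vector space spanned by the images in R/J of the monomials of multidegree D = dL − a_1'E_1 − ... − a_n'E_n has dimension C(d+2, 2) − Σ_{i=1}^{n} C(a_i' + 1, 2). -/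
open MvPolynomial

/-- The class `L` in `ℤ^{n+1}`: the first standard basis vector. -/
def Lcl (n : ℕ) : Fin (n + 1) → ℤ := Pi.single 0 1

/-- The class `Eᵢ` in `ℤ^{n+1}`: the `(i+1)`-st standard basis vector. -/
def Ecl {n : ℕ} (i : Fin n) : Fin (n + 1) → ℤ := Pi.single i.succ 1

/-- The `ℤ^{n+1}`-grading of the variables: `deg l = L − E₁ − ⋯ − Eₙ`,
`deg eᵢ = Eᵢ`, `deg sᵢ = L − Eᵢ`. -/
def coxDeg (n : ℕ) : CoxVar n → (Fin (n + 1) → ℤ) :=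
  Sum.elim (fun _ => Lcl n - ∑ i, Ecl i)
    (Sum.elim (fun i => Ecl i) (fun i => Lcl n - Ecl i))

/-- The multidegree of a monomial exponent vector `m`. -/
def coxMdeg {n : ℕ} (m : CoxVar n →₀ ℕ) : Fin (n + 1) → ℤ :=
  m.sum fun v c => (c : ℤ) • coxDeg n v

theorem aux_deg {n : ℕ} (m : CoxVar n →₀ ℕ) (d : ℕ) (a' : Fin n → ℕ) :
    coxMdeg m = (d : ℤ) • Lcl n - ∑ i, (a' i : ℤ) • Ecl i ↔
      (m (lVar n) + ∑ i, m (sVar i) = d ∧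
        ∀ i, m (lVar n) + m (sVar i) = m (eVar i) + a' i) := by
  have h0 : coxMdeg m 0 = m (lVar n) + ∑ i, (m (sVar i) : ℤ) := by
    unfold coxMdeg
    rw [Finsupp.sum_fintype _ _ (by simp)]
    simp [Fintype.sum_sum_type, coxDeg, Lcl, Ecl, lVar, sVar, Finset.sum_apply]
  have h1 : ∀ i : Fin n, coxMdeg m i.succ = m (eVar i) - m (lVar n) - (m (sVar i) : ℤ) := by
    intro i
    unfold coxMdeg
    rw [Finsupp.sum_fintype _ _ (by simp)]
    simp [Fintype.sum_sum_type, coxDeg, Lcl, Ecl, lVar, sVar, eVar, Finset.sum_apply,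
      Pi.single_apply]
    ring
  have r0 : ((d : ℤ) • Lcl n - ∑ i, (a' i : ℤ) • Ecl i) 0 = d := by
    simp [Lcl, Ecl, Finset.sum_apply]
  have r1 : ∀ i : Fin n, ((d : ℤ) • Lcl n - ∑ i, (a' i : ℤ) • Ecl i) i.succ = - (a' i : ℤ) := by
    intro i
    simp [Lcl, Ecl, Finset.sum_apply, Pi.single_apply]
  constructor
  · intro h
    refine ⟨?_, fun i => ?_⟩
    · have := congrFun h 0
      rw [h0, r0] at this
      exact_mod_cast this
    · have := congrFun h i.succ
      rw [h1, r1] at this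
      omega
  · rintro ⟨h, h'⟩
    funext j
    refine Fin.cases ?_ (fun i => ?_) j
    · rw [h0, r0]; exact_mod_cast h
    · rw [h1, r1]; have := h' i; omega

theorem aux_sum (N x : ℕ) (h : x ≤ N) : ∑ c ∈ Finset.range N, (x - c) = (x + 1).choose 2 := by
  induction x generalizing N with
  | zero => simp
  | succ x ih =>
    obtain ⟨N, rfl⟩ : ∃ M, N = M + 1 := ⟨N - 1, by omega⟩
    rw [Finset.sum_range_succ', Nat.choose_succ_succ' (x + 1) 1, ← ih N (by omega)]
    simp
    ring

theorem aux_le {n : ℕ} (a' : Fin n → ℕ) (d c : ℕ) (hd : (∑ i, a' i) ≤ d) (hc : c ≤ d) :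
    ∑ i, (a' i - c) ≤ d - c := by
  by_cases h : ∀ i, a' i ≤ c
  · have : ∑ i, (a' i - c) = 0 := Finset.sum_eq_zero (fun i _ => by have := h i; omega)
    omega
  · push Not at h
    obtain ⟨j, hj⟩ := h
    rw [← Finset.add_sum_erase _ _ (Finset.mem_univ j)] at hd ⊢
    have : ∑ i ∈ Finset.univ.erase j, (a' i - c) ≤ ∑ i ∈ Finset.univ.erase j, a' i :=
      Finset.sum_le_sum (fun i _ => by omega)
    omega

/-- standard monomials of the given degree -/
def StdSet (n : ℕ) (d : ℕ) (a' : Fin n → ℕ) : Set (CoxVar n →₀ ℕ) :=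
  {m | coxMdeg m = (d : ℤ) • Lcl n - ∑ i, (a' i : ℤ) • Ecl i ∧
    ∀ i : Fin n, i.val < n - 2 → m (sVar i) = 0 ∨ m (eVar i) = 0}

noncomputable def mkMon {n : ℕ} (c : ℕ) (f t : Fin n → ℕ) : CoxVar n →₀ ℕ :=
  Finsupp.equivFunOnFinite.symm (Sum.elim (fun _ => c) (Sum.elim f t))

@[simp] theorem mkMon_l {n : ℕ} (c : ℕ) (f t : Fin n → ℕ) : mkMon c f t (lVar n) = c := rfl
@[simp] theorem mkMon_e {n : ℕ} (c : ℕ) (f t : Fin n → ℕ) (i) : mkMon c f t (eVar i) = f i := rfl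
@[simp] theorem mkMon_s {n : ℕ} (c : ℕ) (f t : Fin n → ℕ) (i) : mkMon c f t (sVar i) = t i := rfl

theorem mon_ext {n : ℕ} {m m' : CoxVar n →₀ ℕ} (hl : m (lVar n) = m' (lVar n))
    (he : ∀ i, m (eVar i) = m' (eVar i)) (hs : ∀ i, m (sVar i) = m' (sVar i)) : m = m' := by
  ext v
  rcases v with ⟨⟩ | i | i
  · exact hl
  · exact he i
  · exact hs i

def tFun {n : ℕ} (d : ℕ) (a' : Fin n → ℕ) (p q : Fin n) (c x : ℕ) (i : Fin n) : ℕ :=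
  (a' i - c) + ((if i = p then x else 0) +
    (if i = q then (d - c - ∑ j, (a' j - c)) - x else 0))

theorem std_eq (n : ℕ) (hn : 3 ≤ n) (d : ℕ) (a' : Fin n → ℕ) (hd : (∑ i, a' i) ≤ d) :
    ∃ S : Finset (CoxVar n →₀ ℕ), (S : Set (CoxVar n →₀ ℕ)) = StdSet n d a' ∧
      (S.card : ℤ) = ((d + 2).choose 2 : ℤ) - ∑ i, (((a' i) + 1).choose 2 : ℤ) := by
  classical
  obtain ⟨p, hp⟩ : ∃ p : Fin n, p.val = n - 2 := ⟨⟨n - 2, by omega⟩, rfl⟩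
  obtain ⟨q, hq⟩ : ∃ q : Fin n, q.val = n - 1 := ⟨⟨n - 1, by omega⟩, rfl⟩
  have hpq : p ≠ q := by intro h; rw [h] at hp; omega
  have hlt : ∀ i : Fin n, i.val < n - 2 ↔ (i ≠ p ∧ i ≠ q) := by
    intro i; rw [ne_eq, ne_eq, Fin.ext_iff, Fin.ext_iff]; have := i.isLt; omega
  let F : (Σ _ : ℕ, ℕ) → (CoxVar n →₀ ℕ) := fun y =>
    mkMon y.1 (fun i => y.1 + tFun d a' p q y.1 y.2 i - a' i) (tFun d a' p q y.1 y.2)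
  let T : Finset (Σ _ : ℕ, ℕ) := (Finset.range (d + 1)).sigma
    (fun c => Finset.range ((d - c - ∑ j, (a' j - c)) + 1))
  have hinj : Function.Injective F := by
    rintro ⟨c, x⟩ ⟨c', x'⟩ h
    have h1 : c = c' := by simpa [F] using congrArg (fun m => m (lVar n)) h
    subst h1
    have h2 : x = x' := by simpa [F, tFun, hpq] using congrArg (fun m => m (sVar p)) h
    subst h2
    rfl
  refine ⟨T.image F, ?_, ?_⟩
  · ext m
    simp only [Finset.coe_image, Set.mem_image, Finset.mem_coe, StdSet, Set.mem_ofPred_eq, aux_deg]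
    constructor
    · rintro ⟨⟨c, x⟩, hy, rfl⟩
      simp only [T, Finset.mem_sigma, Finset.mem_range] at hy
      have hle := aux_le a' d c hd (by omega)
      simp only [F, mkMon_l, mkMon_e, mkMon_s]
      refine ⟨⟨?_, fun i => ?_⟩, fun i hi => ?_⟩
      · simp only [tFun, Finset.sum_add_distrib, Finset.sum_ite_eq', Finset.mem_univ, if_true]
        omega
      · simp only [tFun]; omega
      · rw [hlt] at hi
        simp only [tFun, if_neg hi.1, if_neg hi.2]; omega
    · rintro ⟨⟨h1, h2⟩, h3⟩
      set c := m (lVar n) with hc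
      have hw : ∀ i, a' i - c ≤ m (sVar i) := fun i => by have := h2 i; omega
      have hw0 : ∀ i, i ≠ p → i ≠ q → m (sVar i) = a' i - c := fun i ip iq => by
        have := h2 i; have := h3 i ((hlt i).2 ⟨ip, iq⟩); omega
      have hle := aux_le a' d c hd (by omega)
      have hsum : ∑ i, m (sVar i) = ∑ i, (a' i - c) +
          ((m (sVar p) - (a' p - c)) + (m (sVar q) - (a' q - c))) := by
        rw [← Finset.sum_pair (f := fun i => m (sVar i) - (a' i - c)) hpq,
          Finset.sum_subset (Finset.subset_univ {p, q}), ← Finset.sum_add_distrib]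
        · exact Finset.sum_congr rfl (fun i _ => by have := hw i; omega)
        · intro i _ hi
          simp only [Finset.mem_insert, Finset.mem_singleton, not_or] at hi
          rw [hw0 i hi.1 hi.2]; simp
      have key : tFun d a' p q c (m (sVar p) - (a' p - c)) = fun i => m (sVar i) := by
        funext i
        simp only [tFun]
        by_cases ip : i = p
        · subst ip
          rw [if_pos rfl, if_neg hpq]; have := hw i; omega
        · by_cases iq : i = q
          · subst iq
            rw [if_pos rfl, if_neg ip]; have := hw i; omega
          · rw [if_neg ip, if_neg iq, hw0 i ip iq]; rfl
      refine ⟨⟨c, m (sVar p) - (a' p - c)⟩, ?_, ?_⟩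
      · simp only [T, Finset.mem_sigma, Finset.mem_range]
        omega
      · simp only [F, key]
        refine mon_ext ?_ (fun i => ?_) (fun i => ?_)
        · simp [hc]
        · simp only [mkMon_e]; have := h2 i; omega
        · simp
  · rw [Finset.card_image_of_injective _ hinj, Finset.card_sigma]
    simp only [Finset.card_range]
    have hs : ∀ i, a' i ≤ d + 1 := fun i => by
      have := Finset.single_le_sum (f := a') (fun i _ => Nat.zero_le _) (Finset.mem_univ i); omega
    have e1 := aux_sum (d + 1) (d + 1) le_rfl
    have e2 : ∑ i, (a' i + 1).choose 2 = ∑ c ∈ Finset.range (d + 1), ∑ i, (a' i - c) := by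
      rw [Finset.sum_comm]
      exact Finset.sum_congr rfl (fun i _ => (aux_sum _ _ (hs i)).symm)
    have e3 : ∑ c ∈ Finset.range (d + 1), ((d - c - ∑ j, (a' j - c)) + 1) +
        ∑ i, (a' i + 1).choose 2 = (d + 2).choose 2 := by
      rw [e2, ← e1, ← Finset.sum_add_distrib]
      refine Finset.sum_congr rfl (fun c hc => ?_)
      rw [Finset.mem_range] at hc
      have hle := aux_le a' d c hd (by omega)
      omega
    rw [← e3]
    push_cast
    ring

/-- index embedding -/
def emb {n : ℕ} (i : Fin (n - 2)) : Fin n := Fin.castLE (Nat.sub_le n 2) i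

/-- last but one index -/
def pI {n : ℕ} (hn : 3 ≤ n) : Fin n := ⟨n - 2, by omega⟩

/-- last index -/
def qI {n : ℕ} (hn : 3 ≤ n) : Fin n := ⟨n - 1, by omega⟩

section NF

variable {k : Type*} [Field k] {n : ℕ} (hn : 3 ≤ n) (a b : Fin (n - 2) → k)

/-- exponent of s_i e_i -/
noncomputable def pr (i : Fin n) : CoxVar n →₀ ℕ :=
  Finsupp.single (sVar i) 1 + Finsupp.single (eVar i) 1

theorem pr_l (i : Fin n) : pr i (lVar n) = 0 := by
  simp [pr, lVar, sVar, eVar]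

theorem pr_s (i j : Fin n) : pr i (sVar j) = if i = j then 1 else 0 := by
  simp [pr, sVar, eVar, Finsupp.single_apply]

theorem pr_e (i j : Fin n) : pr i (eVar j) = if i = j then 1 else 0 := by
  simp [pr, sVar, eVar, Finsupp.single_apply]

theorem mon_pr (i : Fin n) :
    (monomial (pr i) (1 : k)) = X (sVar i) * X (eVar i) := by
  simp [pr, X, monomial_mul]

theorem rel_eq (i : Fin (n - 2)) : coxRel k n hn a b i =
    monomial (pr (emb i)) 1 + a i • monomial (pr (pI hn)) 1 + b i • monomial (pr (qI hn)) 1 := by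
  simp only [mon_pr, coxRel, emb, pI, qI, smul_eq_C_mul, mul_assoc]

theorem mon_mul_rel (m : CoxVar n →₀ ℕ) (i : Fin (n - 2)) :
    monomial m 1 * coxRel k n hn a b i =
    monomial (m + pr (emb i)) 1 + a i • monomial (m + pr (pI hn)) 1
      + b i • monomial (m + pr (qI hn)) 1 := by
  rw [rel_eq]
  simp only [mul_add, mul_smul_comm, monomial_mul, one_mul]

/-- reduced exponent -/
noncomputable def red (m : CoxVar n →₀ ℕ) : CoxVar n →₀ ℕ :=
  mkMon (m (lVar n))
    (fun i => if i.val < n - 2 then m (eVar i) - m (sVar i) else m (eVar i))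
    (fun i => if i.val < n - 2 then m (sVar i) - m (eVar i) else m (sVar i))

/-- replacement of s_i e_i -/
noncomputable def hh (i : Fin (n - 2)) : MvPolynomial (CoxVar n) k :=
  -(a i • monomial (pr (pI hn)) 1 + b i • monomial (pr (qI hn)) 1)

noncomputable def nfm (m : CoxVar n →₀ ℕ) : MvPolynomial (CoxVar n) k :=
  monomial (red m) 1 * ∏ i, hh hn a b i ^ min (m (sVar (emb i))) (m (eVar (emb i)))

theorem nfm_std (m : CoxVar n →₀ ℕ)
    (h : ∀ i : Fin n, i.val < n - 2 → m (sVar i) = 0 ∨ m (eVar i) = 0) :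
    nfm hn a b m = monomial m 1 := by
  have h1 : red m = m := by
    refine mon_ext ?_ (fun i => ?_) (fun i => ?_)
    · simp [red]
    · simp only [red, mkMon_e]
      split_ifs with hi
      · have := h i hi; omega
      · rfl
    · simp only [red, mkMon_s]
      split_ifs with hi
      · have := h i hi; omega
      · rfl
  have h2 : ∀ i : Fin (n - 2), min (m (sVar (emb i))) (m (eVar (emb i))) = 0 := by
    intro i
    have := h (emb i) i.isLt
    omega
  simp [nfm, h1, h2]

theorem emb_inj {i j : Fin (n - 2)} : emb i = emb j ↔ i = j := by
  simp [emb, Fin.ext_iff]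

theorem nfm_add_emb (m : CoxVar n →₀ ℕ) (i : Fin (n - 2)) :
    nfm hn a b (m + pr (emb i)) = hh hn a b i * nfm hn a b m := by
  have h1 : red (m + pr (emb i)) = red m := by
    refine mon_ext ?_ (fun j => ?_) (fun j => ?_)
    · simp [red, pr_l]
    · simp only [red, mkMon_e, Finsupp.add_apply, pr_e, pr_s]
      split_ifs with h1 h2 h2
      · omega
      · omega
      · exact absurd (h2 ▸ i.isLt : j.val < n - 2) h1
      · rfl
    · simp only [red, mkMon_s, Finsupp.add_apply, pr_e, pr_s]
      split_ifs with h1 h2 h2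
      · omega
      · omega
      · exact absurd (h2 ▸ i.isLt : j.val < n - 2) h1
      · rfl
  have h2 : ∀ j : Fin (n - 2), min ((m + pr (emb i)) (sVar (emb j))) ((m + pr (emb i)) (eVar (emb j)))
      = min (m (sVar (emb j))) (m (eVar (emb j))) + if i = j then 1 else 0 := by
    intro j
    simp only [Finsupp.add_apply, pr_e, pr_s, emb_inj]
    omega
  simp only [nfm, h1, h2, pow_add, Finset.prod_mul_distrib, pow_ite, pow_one, pow_zero,
    Finset.prod_ite_eq, Finset.mem_univ, if_true]
  ring

theorem nfm_add_ge (m : CoxVar n →₀ ℕ) (q : Fin n) (hq : n - 2 ≤ q.val) :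
    nfm hn a b (m + pr q) = monomial (pr q) 1 * nfm hn a b m := by
  have hne : ∀ j : Fin n, j.val < n - 2 → q ≠ j := by rintro j hj rfl; omega
  have h1 : red (m + pr q) = pr q + red m := by
    refine mon_ext ?_ (fun j => ?_) (fun j => ?_)
    · simp [red, pr_l]
    · simp only [red, mkMon_e, Finsupp.add_apply, pr_e, pr_s]
      by_cases hj : j.val < n - 2
      · simp [hj, hne j hj]
      · simp [hj, add_comm]
    · simp only [red, mkMon_s, Finsupp.add_apply, pr_e, pr_s]
      by_cases hj : j.val < n - 2
      · simp [hj, hne j hj]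
      · simp [hj, add_comm]
  have h2 : ∀ j : Fin (n - 2), min ((m + pr q) (sVar (emb j))) ((m + pr q) (eVar (emb j)))
      = min (m (sVar (emb j))) (m (eVar (emb j))) := by
    intro j
    have := hne (emb j) j.isLt
    simp [pr_e, pr_s, this]
  simp only [nfm, h1, h2]
  rw [← mul_assoc, monomial_mul, one_mul]

/-- normal form map -/
noncomputable def NF : MvPolynomial (CoxVar n) k →ₗ[k] MvPolynomial (CoxVar n) k :=
  (basisMonomials (CoxVar n) k).constr k (nfm hn a b)

theorem NF_mon (m : CoxVar n →₀ ℕ) : NF hn a b (monomial m 1) = nfm hn a b m := by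
  have := (basisMonomials (CoxVar n) k).constr_basis k (nfm hn a b) m
  simpa [NF] using this

theorem NF_mul_rel (r : MvPolynomial (CoxVar n) k) (i : Fin (n - 2)) :
    NF hn a b (r * coxRel k n hn a b i) = 0 := by
  induction r using MvPolynomial.induction_on' with
  | monomial m c =>
    have : (monomial m c : MvPolynomial (CoxVar n) k) = c • monomial m 1 := by
      simp [smul_monomial]
    rw [this, smul_mul_assoc, map_smul, mon_mul_rel]
    simp only [map_add, map_smul, NF_mon, nfm_add_emb]
    rw [nfm_add_ge hn a b m (pI hn) le_rfl, nfm_add_ge hn a b m (qI hn) (by simp [qI]; omega)]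
    simp only [hh, neg_mul, add_mul, smul_mul_assoc]
    rw [show ∀ x y : MvPolynomial (CoxVar n) k, -(x + y) + x + y = 0 by intros; ring, smul_zero]
  | add p q hp hq => rw [add_mul, map_add, hp, hq, add_zero]

theorem NF_ker (r : MvPolynomial (CoxVar n) k)
    (hr : r ∈ Ideal.span (Set.range (coxRel k n hn a b))) : NF hn a b r = 0 := by
  obtain ⟨f, rfl⟩ := (Submodule.mem_span_range_iff_exists_fun _).1 hr
  simp only [map_sum, smul_eq_mul, NF_mul_rel, Finset.sum_const_zero]

/-- quotient map on monomials -/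
noncomputable def qm (m : CoxVar n →₀ ℕ) :
    MvPolynomial (CoxVar n) k ⧸ Ideal.span (Set.range (coxRel k n hn a b)) :=
  Ideal.Quotient.mk (Ideal.span (Set.range (coxRel k n hn a b))) (monomial m (1 : k))

theorem qm_rel (m : CoxVar n →₀ ℕ) (i : Fin (n - 2)) :
    qm hn a b (m + pr (emb i)) =
      -(a i • qm hn a b (m + pr (pI hn)) + b i • qm hn a b (m + pr (qI hn))) := by
  have h : Ideal.Quotient.mkₐ k (Ideal.span (Set.range (coxRel k n hn a b)))
      (monomial m 1 * coxRel k n hn a b i) = 0 := by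
    rw [Ideal.Quotient.mkₐ_eq_mk, Ideal.Quotient.eq_zero_iff_mem]
    exact Ideal.mul_mem_left _ _ (Ideal.subset_span ⟨i, rfl⟩)
  rw [mon_mul_rel] at h
  simp only [map_add, map_smul] at h
  rw [add_assoc] at h
  exact eq_neg_of_add_eq_zero_left h

theorem deg_pr (m : CoxVar n →₀ ℕ) (i j : Fin n) (d : ℕ) (a' : Fin n → ℕ)
    (h : coxMdeg (m + pr i) = (d : ℤ) • Lcl n - ∑ i, (a' i : ℤ) • Ecl i) :
    coxMdeg (m + pr j) = (d : ℤ) • Lcl n - ∑ i, (a' i : ℤ) • Ecl i := by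
  rw [aux_deg] at h ⊢
  obtain ⟨h1, h2⟩ := h
  simp only [Finsupp.add_apply, pr_l, pr_s, pr_e, Finset.sum_add_distrib, Finset.sum_ite_eq,
    Finset.mem_univ, if_true] at h1 h2 ⊢
  refine ⟨h1, fun l => ?_⟩
  have := h2 l
  omega

theorem span_std (d : ℕ) (a' : Fin n → ℕ) (N : ℕ) : ∀ m : CoxVar n →₀ ℕ,
    ∑ i : Fin (n - 2), m (sVar (emb i)) = N →
    coxMdeg m = (d : ℤ) • Lcl n - ∑ i, (a' i : ℤ) • Ecl i →
    qm hn a b m ∈ Submodule.span k (qm hn a b '' StdSet n d a') := by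
  induction N using Nat.strong_induction_on with
  | _ N ih =>
  intro m hN hm
  by_cases hs : ∀ i : Fin n, i.val < n - 2 → m (sVar i) = 0 ∨ m (eVar i) = 0
  · exact Submodule.subset_span ⟨m, ⟨hm, hs⟩, rfl⟩
  · push Not at hs
    obtain ⟨i0, hi0, h1, h2⟩ := hs
    obtain ⟨i, rfl⟩ : ∃ i : Fin (n - 2), i0 = emb i := ⟨⟨i0.val, hi0⟩, rfl⟩
    obtain ⟨m', rfl⟩ : ∃ m', m = m' + pr (emb i) := by
      refine ⟨m - pr (emb i), (tsub_add_cancel_of_le ?_).symm⟩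
      intro v
      rcases v with ⟨⟩ | j | j
      · exact (pr_l (emb i)).le.trans (Nat.zero_le _)
      · refine (pr_e (emb i) j).le.trans ?_
        split_ifs with h
        · subst h; exact Nat.one_le_iff_ne_zero.2 h2
        · exact Nat.zero_le _
      · refine (pr_s (emb i) j).le.trans ?_
        split_ifs with h
        · subst h; exact Nat.one_le_iff_ne_zero.2 h1
        · exact Nat.zero_le _
    have hval : ∑ j : Fin (n - 2), m' (sVar (emb j)) < N := by
      rw [← hN]
      simp only [Finsupp.add_apply, pr_s, emb_inj, Finset.sum_add_distrib, Finset.sum_ite_eq,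
        Finset.mem_univ, if_true]
      omega
    have hq : ∀ q : Fin n, n - 2 ≤ q.val → qm hn a b (m' + pr q) ∈
        Submodule.span k (qm hn a b '' StdSet n d a') := by
      intro q hq
      refine ih _ hval _ ?_ (deg_pr _ _ _ _ _ hm)
      refine Finset.sum_congr rfl (fun j _ => ?_)
      have : q ≠ emb j := by
        rintro rfl
        have := j.isLt
        simp [emb] at hq
        omega
      simp [pr_s, this]
    rw [qm_rel]
    exact Submodule.neg_mem _ (Submodule.add_mem _
      (Submodule.smul_mem _ _ (hq _ le_rfl))
      (Submodule.smul_mem _ _ (hq _ (by simp [qI]; omega))))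

theorem qm_indep (d : ℕ) (a' : Fin n → ℕ) :
    LinearIndependent k (fun m : StdSet n d a' => qm hn a b m.1) := by
  let J := Ideal.span (Set.range (coxRel k n hn a b))
  let f : (MvPolynomial (CoxVar n) k ⧸ J) →ₗ[k] MvPolynomial (CoxVar n) k :=
    (Submodule.liftQ (J.restrictScalars k) (NF hn a b)
      (fun r hr => NF_ker hn a b r hr)).comp
      (Submodule.Quotient.restrictScalarsEquiv k J).symm.toLinearMap
  apply LinearIndependent.of_comp f
  have : (f ∘ fun m : StdSet n d a' => qm hn a b m.1) =
      (basisMonomials (CoxVar n) k) ∘ (Subtype.val : StdSet n d a' → _) := by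
    funext m
    have : f (qm hn a b m.1) = NF hn a b (monomial m.1 1) := rfl
    simp only [Function.comp, this, NF_mon, coe_basisMonomials]
    exact nfm_std hn a b m.1 m.2.2
  rw [this]
  exact (basisMonomials (CoxVar n) k).linearIndependent.comp _ Subtype.val_injective

end NF

/-- For `n ≥ 3`, nonzero scalars `aᵢ, bᵢ`, and any non-negative integers
`d, a₁', …, aₙ'` with `d ≥ a₁' + ⋯ + aₙ'`, the `k`-vector space spanned by the images in
`R/J` of the monomials of multidegree `D = dL − a₁'E₁ − ⋯ − aₙ'Eₙ` has dimension
`C(d+2, 2) − Σᵢ C(aᵢ'+1, 2)`. -/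
theorem stmt11 (k : Type*) [Field k] (n : ℕ) (hn : 3 ≤ n)
    (a b : Fin (n - 2) → k) (ha : ∀ i, a i ≠ 0) (hb : ∀ i, b i ≠ 0)
    (d : ℕ) (a' : Fin n → ℕ) (hd : (∑ i, a' i) ≤ d) :
    (Module.finrank k ↥(Submodule.span k
        ((fun m : CoxVar n →₀ ℕ =>
            Ideal.Quotient.mk (Ideal.span (Set.range (coxRel k n hn a b)))
              (monomial m (1 : k))) ''
          {m : CoxVar n →₀ ℕ |
            coxMdeg m = (d : ℤ) • Lcl n - ∑ i, (a' i : ℤ) • Ecl i})) : ℤ)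
      = ((d + 2).choose 2 : ℤ) - ∑ i, (((a' i) + 1).choose 2 : ℤ) := by
  obtain ⟨S, hS, hc⟩ := std_eq n hn d a' hd
  rw [← hc]
  have hspan : Submodule.span k (qm hn a b ''
      {m : CoxVar n →₀ ℕ | coxMdeg m = (d : ℤ) • Lcl n - ∑ i, (a' i : ℤ) • Ecl i}) =
      Submodule.span k (Set.range (fun m : StdSet n d a' => qm hn a b m.1)) := by
    apply le_antisymm
    · rw [Submodule.span_le]
      rintro _ ⟨m, hm, rfl⟩
      have := span_std hn a b d a' _ m rfl hm
      rwa [Set.image_eq_range] at this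
    · apply Submodule.span_mono
      rintro _ ⟨m, rfl⟩
      exact ⟨m.1, m.2.1, rfl⟩
  change ((Module.finrank k ↥(Submodule.span k (qm hn a b ''
      {m : CoxVar n →₀ ℕ | coxMdeg m = (d : ℤ) • Lcl n - ∑ i, (a' i : ℤ) • Ecl i})) : ℕ) : ℤ) = _
  rw [hspan]
  have hfin : (StdSet n d a').Finite := hS ▸ S.finite_toSet
  haveI := hfin.fintype
  rw [finrank_span_eq_card (qm_indep hn a b d a')]
  congr 1
  rw [← Nat.card_eq_fintype_card, Nat.card_coe_set_eq, ← hS, Set.ncard_coe_finset]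
end
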